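/- For every sequence ω ∈ (D_b^m)^{ℕ₀}, the Hausdorff dimension of the survivor set K^ω satisfies log η / log b ≤ dim_H K^ω ≤ log λ / log b, where η is the unique root in (b−1, b) of x^m − b x^{m−1} + 1 = 0 and λ is the unique root in (b−1, b) of x^m − (b−1)(x^{m−1} + x^{m−2} + ⋯ + x + 1) = 0. -/

import Mathlib

/-!
Words are weighted by potentials that depend only on which forbidden words are partially read.
Say that a word `u` of length `n` is in progress with depth `q` if its last `q` letters are the
first `q` letters of `ω (n - q)`; appending a letter `c` turns depth `q` into depth `q + 1` when
`c` is the next letter of that forbidden word, and otherwise ends the progress. Admissibility means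
that depth `m` is never reached.

Lower bound. Charge `η ^ (q - m)` for each depth `q` with `1 ≤ q ≤ m` at which `u` is in progress,
and let `pot u` be `1` minus the total charge. As exactly one letter advances each depth, the
equation for `η`, in the form `b - η = η ^ (1 - m)`, gives `∑ c, pot (uc) = η * pot u` (`sum_pot`).
A child completing a forbidden word has `pot ≤ 0`, so the positive parts of the potentials of the
children sum to at least `η * pot u`, and splitting mass in proportion to these positive parts
yields a probability measure on admissible sequences for which cylinders of level `n` have mass at
most `η ^ (-n)` (`mass_le`). Its inverse distribution function sends `t ∈ [0, 1)` to a point of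
`K^ω` (`exists_seq`), and the map back from these points to `t` is Hölder with exponent
`log η / log b` (`param_le`). A Hölder map of exponent `s` increases dimension by a factor at most
`1 / s`, and `[0, 1)` has dimension `1`.

Upper bound. Let `h q = λ ^ q - (b - 1) * ∑ i < q, λ ^ i`. It decreases from `h 0 = 1` to `h m = 0`
and satisfies `h (q + 1) + (b - 1) * h 0 = λ * h q`. Weigh an admissible word by `h q` with `q` its
greatest depth: one child has depth at least `q + 1` and the others weigh at most `h 0`, so the
weights of the children sum to at most `λ` times the weight of the word (`sum_wt`). Hence there are
`O(λ ^ n)` admissible words of length `n` (`card_allowed`), and covering `K^ω` by their cylinders,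
of diameter `b ^ (-n)`, shows that its Hausdorff measure of dimension `log λ / log b` is finite.
-/

open MeasureTheory Filter

namespace Paper


/-- The set `Σ_k^ω` of admissible words of length `k`. -/
def SigmaSet (b m : ℕ) (ω : ℕ → Fin m → Fin b) (k : ℕ) : Set (Fin k → Fin b) :=
  { d | ∀ (i : ℕ) (hi : i + m ≤ k),
      (fun j : Fin m => d ⟨i + j.1, by have := j.isLt; omega⟩) ≠ ω i }

/-- The survivor set `K^ω ⊆ [0,1]`. -/
def Kset (b m : ℕ) (ω : ℕ → Fin m → Fin b) : Set ℝ :=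
  { x | ∃ d : ℕ → Fin b,
      (∀ k : ℕ, (fun j : Fin m => d (k + j.1)) ≠ ω k) ∧
      x = ∑' i : ℕ, ((d i : ℕ) : ℝ) / (b : ℝ) ^ (i + 1) }

open Classical in
/-- The adjacency matrix `A_d` of the subshift of finite type with forbidden word `d`. -/
noncomputable def adjMat (b m : ℕ) (d : Fin m → Fin b) :
    Matrix (Fin (m - 1) → Fin b) (Fin (m - 1) → Fin b) ℝ :=
  fun u v =>
    if ((∀ (i : ℕ) (h : i + 1 < m - 1), u ⟨i + 1, h⟩ = v ⟨i, by omega⟩) ∧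
        ¬ ((∀ (j : ℕ) (h : j < m - 1), u ⟨j, h⟩ = d ⟨j, by omega⟩) ∧
           (∀ (h2 : m - 2 < m - 1), v ⟨m - 2, h2⟩ = d ⟨m - 1, by omega⟩)))
    then 1 else 0

/-- The norm `‖M‖ = ∑_{i,j} |m_{ij}|` of a real square matrix. -/
noncomputable def matNorm {n : Type*} [Fintype n] (M : Matrix n n ℝ) : ℝ :=
  ∑ i, ∑ j, |M i j|

/-- The product `A_{ω^0} A_{ω^1} ⋯ A_{ω^{n-1}}`. -/
noncomputable def prodA (b m : ℕ) (ω : ℕ → Fin m → Fin b) (n : ℕ) :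
    Matrix (Fin (m - 1) → Fin b) (Fin (m - 1) → Fin b) ℝ :=
  ((List.range n).map (fun i => adjMat b m (ω i))).prod

/-- `ω` is progressively overlapping at position `k`. -/
def ProgOverlapAt (b m : ℕ) (ω : ℕ → Fin m → Fin b) (k : ℕ) : Prop :=
  ∀ j : ℕ, 1 ≤ j → j ≤ min k (m - 1) →
    ∀ (t : ℕ) (h : t + j < m),
      ω k ⟨t, by omega⟩ = ω (k - j) ⟨t + j, h⟩

/-- `ω` is totally distinct at position `k`. -/
def TotDistinctAt (b m : ℕ) (ω : ℕ → Fin m → Fin b) (k : ℕ) : Prop :=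
  ∀ j : ℕ, 1 ≤ j → j ≤ min k (m - 1) →
    ¬ (∀ (t : ℕ) (h : t + j < m),
        ω k ⟨t, by omega⟩ = ω (k - j) ⟨t + j, h⟩)

/-- A set `F ⊆ ℝ` is `s`-Ahlfors regular. -/
def AhlforsRegular (F : Set ℝ) (s : ℝ) : Prop :=
  ∃ c : ℝ, 1 ≤ c ∧ ∀ x ∈ F, ∀ r : ℝ, 0 < r → r < 1 →
    ENNReal.ofReal (c⁻¹ * r ^ s) ≤ Measure.hausdorffMeasure s (F ∩ Metric.closedBall x r) ∧
    Measure.hausdorffMeasure s (F ∩ Metric.closedBall x r) ≤ ENNReal.ofReal (c * r ^ s)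


/-! ### Words coded by integers -/

/-- The letter at position `p` of the `k`-th forbidden word, as a natural number
(with junk value `0` for `p ≥ m`). -/
def ltr {b m : ℕ} (ω : ℕ → Fin m → Fin b) (k p : ℕ) : ℕ :=
  if h : p < m then (ω k ⟨p, h⟩ : ℕ) else 0

/-- A word `u` of length `n` is coded by the integer `j < b ^ n` whose base-`b` expansion it is, so
that the word `uc` has code `b * j + c`. `Alive ω n q j` says that `q ≤ n` and that the last `q`
letters of the word coded by `j` are the first `q` letters of `ω (n - q)`. -/
def Alive {b m : ℕ} (ω : ℕ → Fin m → Fin b) : ℕ → ℕ → ℕ → Prop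
  | _, 0, _ => True
  | 0, _ + 1, _ => False
  | n + 1, q + 1, j => Alive ω n q (j / b) ∧ j % b = ltr ω (n - q) q

/-- The code of the prefix of length `n` of a digit sequence. -/
def num {b : ℕ} (d : ℕ → Fin b) : ℕ → ℕ
  | 0 => 0
  | n + 1 => b * num d n + d n

lemma num_div {b : ℕ} (d : ℕ → Fin b) (n : ℕ) : num d (n + 1) / b = num d n := by
  have hb : 0 < b := Fin.pos (d 0)
  rw [num, Nat.mul_add_div hb, Nat.div_eq_of_lt (d n).isLt, add_zero]

lemma num_mod {b : ℕ} (d : ℕ → Fin b) (n : ℕ) : num d (n + 1) % b = d n := by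
  rw [num, Nat.mul_add_mod, Nat.mod_eq_of_lt (d n).isLt]

lemma num_lt {b : ℕ} (d : ℕ → Fin b) (n : ℕ) : num d n < b ^ n := by
  induction n with
  | zero => simp [num]
  | succ n ih =>
    have h := (d n).isLt
    calc num d (n + 1) < b * (num d n + 1) := by rw [num]; linarith
      _ ≤ b * b ^ n := Nat.mul_le_mul_left _ ih
      _ = b ^ (n + 1) := by ring

/-- The real number with a given digit sequence. -/
noncomputable def val {b : ℕ} (d : ℕ → Fin b) : ℝ :=
  ∑' i : ℕ, ((d i : ℕ) : ℝ) / (b : ℝ) ^ (i + 1)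

lemma val_mem {b : ℕ} (d : ℕ → Fin b) (n : ℕ) :
    val d ∈ Set.Icc ((num d n : ℝ) / (b : ℝ) ^ n) (((num d n : ℝ) + 1) / (b : ℝ) ^ n) := by
  have hb : (0 : ℝ) < b := by exact_mod_cast Fin.pos (d 0)
  have h1 : ∀ n, ∑ i ∈ Finset.range n, Real.ofDigitsTerm d i = (num d n : ℝ) / (b : ℝ) ^ n := by
    intro n
    induction n with
    | zero => simp [num]
    | succ n ih =>
      rw [Finset.sum_range_succ, ih, num, Real.ofDigitsTerm]
      push_cast
      field_simp
      ring
  have h2 : val d = Real.ofDigits d := rfl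
  have h3 := Real.ofDigits_nonneg (fun i ↦ d (i + n))
  have h4 := Real.ofDigits_le_one (fun i ↦ d (i + n))
  rw [h2, Real.ofDigits_eq_sum_add_ofDigits d n, h1, add_div, one_div]
  have h5 : (0 : ℝ) ≤ ((b : ℝ) ^ n)⁻¹ := by positivity
  constructor
  · have := mul_nonneg h5 h3
    linarith
  · have := mul_le_of_le_one_right h5 h4
    linarith

/-- Full-length aliveness at time `k + m` means that the constraint at position `k` is violated. -/
lemma alive_num_iff {b m : ℕ} (ω : ℕ → Fin m → Fin b) (d : ℕ → Fin b) (k : ℕ) :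
    Alive ω (k + m) m (num d (k + m)) ↔ (fun j : Fin m => d (k + j.1)) = ω k := by
  have key : ∀ q, q ≤ m → (Alive ω (k + q) q (num d (k + q)) ↔
      ∀ p (hp : p < m), p < q → d (k + p) = ω k ⟨p, hp⟩) := by
    intro q
    induction q with
    | zero => intro _; simp [Alive]
    | succ q ih =>
      intro hq
      rw [← add_assoc, Alive, num_div, num_mod, ih (by omega), ltr, dif_pos (by omega)]
      simp only [Nat.add_sub_cancel]
      constructor
      · rintro ⟨h1, h2⟩ p hp hpq
        rcases Nat.lt_succ_iff_lt_or_eq.1 hpq with h | rfl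
        · exact h1 p hp h
        · exact Fin.ext h2
      · intro h
        exact ⟨fun p hp hpq => h p hp (by omega), congrArg Fin.val (h q (by omega) (by omega))⟩
  rw [key m le_rfl]
  constructor
  · intro h; ext j; rw [h j.1 j.2 j.2]
  · intro h p hp _; exact congrFun h ⟨p, hp⟩

lemma alive_le {b m : ℕ} (ω : ℕ → Fin m → Fin b) {n q j : ℕ} (h : Alive ω n q j) : q ≤ n := by
  induction n generalizing q j with
  | zero => cases q <;> simp_all [Alive]
  | succ n ih =>
    cases q with
    | zero => omega
    | succ q => have := ih h.1; omega

lemma not_alive_num {b m : ℕ} (ω : ℕ → Fin m → Fin b) (d : ℕ → Fin b)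
    (hd : ∀ k : ℕ, (fun j : Fin m => d (k + j.1)) ≠ ω k) (n : ℕ) :
    ¬ Alive ω n m (num d n) := by
  intro h
  obtain ⟨k, rfl⟩ := Nat.exists_eq_add_of_le' (alive_le ω h)
  exact hd k ((alive_num_iff ω d k).1 h)

lemma child_div {b c : ℕ} (hc : c < b) (j : ℕ) : (b * j + c) / b = j := by
  rw [Nat.mul_add_div (by omega), Nat.div_eq_of_lt hc, add_zero]

lemma child_mod {b c : ℕ} (hc : c < b) (j : ℕ) : (b * j + c) % b = c := by
  rw [Nat.mul_add_mod, Nat.mod_eq_of_lt hc]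

lemma alive_child {b m : ℕ} (ω : ℕ → Fin m → Fin b) {n q j c : ℕ} (hc : c < b) :
    Alive ω (n + 1) (q + 1) (b * j + c) ↔ Alive ω n q j ∧ c = ltr ω (n - q) q := by
  rw [Alive, child_div hc, child_mod hc]

lemma ltr_lt {b m : ℕ} (hb : 0 < b) (ω : ℕ → Fin m → Fin b) (k p : ℕ) : ltr ω k p < b := by
  unfold ltr; split_ifs
  · exact Fin.isLt _
  · exact hb

lemma sum_range_children (b N : ℕ) (f : ℕ → ℝ) :
    ∑ i ∈ Finset.range (b * N), f i =
      ∑ j ∈ Finset.range N, ∑ c ∈ Finset.range b, f (b * j + c) := by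
  induction N with
  | zero => simp
  | succ N ih => rw [Nat.mul_succ, Finset.sum_range_add, ih, Finset.sum_range_succ]

/-! ### Lower bound: a measure on admissible words -/

open Classical in
/-- The potential of the word of length `n` coded by `j`: each forbidden word of which the first
`q` letters have already been read costs `η ^ (q - m)`. -/
noncomputable def pot {b m : ℕ} (ω : ℕ → Fin m → Fin b) (eta : ℝ) (n j : ℕ) : ℝ :=
  1 - ∑ q ∈ Finset.range m, if Alive ω n (q + 1) j then eta ^ (q + 1) / eta ^ m else 0

lemma pot_le_one {b m : ℕ} (ω : ℕ → Fin m → Fin b) {eta : ℝ} (h0 : 0 < eta) (n j : ℕ) :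
    pot ω eta n j ≤ 1 := by
  classical
  unfold pot
  have : 0 ≤ ∑ q ∈ Finset.range m, if Alive ω n (q + 1) j then eta ^ (q + 1) / eta ^ m else 0 :=
    Finset.sum_nonneg fun q _ => by split_ifs <;> positivity
  linarith

lemma pot_zero {b m : ℕ} (ω : ℕ → Fin m → Fin b) (eta : ℝ) (j : ℕ) : pot ω eta 0 j = 1 := by
  simp [pot, Alive]

/-- A word completing a forbidden word has no positive potential. -/
lemma pot_nonpos {b m : ℕ} (hm : 2 ≤ m) (ω : ℕ → Fin m → Fin b) {eta : ℝ} (h0 : 0 < eta)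
    {n j : ℕ} (h : Alive ω n m j) : pot ω eta n j ≤ 0 := by
  obtain ⟨m, rfl⟩ := Nat.exists_eq_add_of_le' (show 1 ≤ m by omega)
  classical
  unfold pot
  rw [Finset.sum_range_succ, if_pos h, div_self (by positivity)]
  have : 0 ≤ ∑ q ∈ Finset.range m,
      if Alive ω n (q + 1) j then eta ^ (q + 1) / eta ^ (m + 1) else 0 :=
    Finset.sum_nonneg fun q _ => by split_ifs <;> positivity
  linarith

/-- The potential is an eigenfunction: this is where the equation for `η` is used. -/
lemma sum_pot {b m : ℕ} (hb : 0 < b) (hm : 2 ≤ m) (ω : ℕ → Fin m → Fin b) {eta : ℝ}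
    (h0 : 0 < eta) (heta : eta ^ m = (b : ℝ) * eta ^ (m - 1) - 1) {n j : ℕ}
    (h : ¬ Alive ω n m j) :
    ∑ c ∈ Finset.range b, pot ω eta (n + 1) (b * j + c) = eta * pot ω eta n j := by
  classical
  have h1 : ∀ q, ∑ c ∈ Finset.range b, (if Alive ω (n + 1) (q + 1) (b * j + c)
      then eta ^ (q + 1) / eta ^ m else 0) =
      if Alive ω n q j then eta ^ (q + 1) / eta ^ m else 0 := by
    intro q
    rw [Finset.sum_congr rfl (g := fun c => if c = ltr ω (n - q) q then
      (if Alive ω n q j then eta ^ (q + 1) / eta ^ m else 0) else 0)]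
    · rw [Finset.sum_ite_eq', if_pos (Finset.mem_range.2 (ltr_lt hb _ _ _))]
    · intro c hc
      simp only [alive_child ω (Finset.mem_range.1 hc)]
      split_ifs <;> simp_all
  unfold pot
  rw [Finset.sum_sub_distrib, Finset.sum_comm, Finset.sum_congr rfl fun q _ => h1 q]
  obtain ⟨m, rfl⟩ := Nat.exists_eq_add_of_le' (show 1 ≤ m by omega)
  rw [Finset.sum_range_succ', Finset.sum_range_succ, if_neg h, mul_sub, add_zero,
    Finset.mul_sum, if_pos (by simp [Alive])]
  have h2 : eta ^ (0 + 1) / eta ^ (m + 1) = b - eta := by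
    simp only [Nat.add_sub_cancel] at heta
    rw [div_eq_iff (by positivity), heta]
    have : eta ^ (m + 1) = eta * eta ^ m := by ring
    have h3 : (b - eta) * eta ^ m = 1 := by linarith
    calc eta ^ (0 + 1) = eta * 1 := by ring
      _ = (b - eta) * (eta * eta ^ m) := by rw [← h3]; ring
      _ = _ := by rw [← this, heta]
  rw [h2]
  have h3 : ∀ q ∈ Finset.range m,
      (if Alive ω n (q + 1) j then eta ^ (q + 1 + 1) / eta ^ (m + 1) else 0) =
      eta * (if Alive ω n (q + 1) j then eta ^ (q + 1) / eta ^ (m + 1) else 0) := by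
    intro q _
    split_ifs
    · ring
    · simp
  rw [Finset.sum_congr rfl h3]
  simp
  ring

/-- The total positive part of the potentials of the children of a word. -/
noncomputable def potSum {b m : ℕ} (ω : ℕ → Fin m → Fin b) (eta : ℝ) (n j : ℕ) : ℝ :=
  ∑ c ∈ Finset.range b, max (pot ω eta (n + 1) (b * j + c)) 0

/-- The mass of the cylinder coded by `j` at level `n`: each word distributes its mass among
its children proportionally to the positive parts of their potentials. -/
noncomputable def mass {b m : ℕ} (ω : ℕ → Fin m → Fin b) (eta : ℝ) : ℕ → ℕ → ℝ
  | 0, _ => 1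
  | n + 1, j => mass ω eta n (j / b) * max (pot ω eta (n + 1) j) 0 / potSum ω eta n (j / b)

lemma potSum_nonneg {b m : ℕ} (ω : ℕ → Fin m → Fin b) (eta : ℝ) (n j : ℕ) :
    0 ≤ potSum ω eta n j := Finset.sum_nonneg fun _ _ => le_max_right _ _

lemma mass_nonneg {b m : ℕ} (ω : ℕ → Fin m → Fin b) (eta : ℝ) (n j : ℕ) :
    0 ≤ mass ω eta n j := by
  induction n generalizing j with
  | zero => simp [mass]
  | succ n ih =>
    exact div_nonneg (mul_nonneg (ih _) (le_max_right _ _)) (potSum_nonneg _ _ _ _)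

/-- A word of positive potential passes on at least `η` times its potential, since discarding
the forbidden child only discards a nonpositive term. -/
lemma le_potSum {b m : ℕ} (hb : 0 < b) (hm : 2 ≤ m) (ω : ℕ → Fin m → Fin b) {eta : ℝ}
    (h0 : 0 < eta) (heta : eta ^ m = (b : ℝ) * eta ^ (m - 1) - 1) {n j : ℕ}
    (h : 0 < pot ω eta n j) : eta * pot ω eta n j ≤ potSum ω eta n j := by
  rw [← sum_pot hb hm ω h0 heta fun h' => (pot_nonpos hm ω h0 h').not_gt h]
  exact Finset.sum_le_sum fun _ _ => le_max_left _ _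

lemma mass_le {b m : ℕ} (hb : 0 < b) (hm : 2 ≤ m) (ω : ℕ → Fin m → Fin b) {eta : ℝ}
    (h0 : 0 < eta) (heta : eta ^ m = (b : ℝ) * eta ^ (m - 1) - 1) (n j : ℕ) :
    mass ω eta n j ≤ max (pot ω eta n j) 0 * (eta⁻¹) ^ n := by
  induction n generalizing j with
  | zero => simp [mass, pot_zero]
  | succ n ih =>
    have ih := ih (j / b)
    rw [mass]
    rcases le_or_gt (pot ω eta n (j / b)) 0 with h | h
    · rw [max_eq_right h, zero_mul] at ih
      rw [le_antisymm ih (mass_nonneg _ _ _ _)]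
      simp only [zero_mul, zero_div]
      positivity
    · rw [max_eq_left h.le] at ih
      have h1 := le_potSum hb hm ω h0 heta h
      have h2 : 0 < potSum ω eta n (j / b) := lt_of_lt_of_le (by positivity) h1
      rw [div_le_iff₀ h2]
      have h3 : 0 ≤ max (pot ω eta (n + 1) j) 0 := le_max_right _ _
      calc _ ≤ pot ω eta n (j / b) * (eta⁻¹) ^ n * max (pot ω eta (n + 1) j) 0 := by gcongr
        _ = max (pot ω eta (n + 1) j) 0 * (eta⁻¹) ^ (n + 1) * (eta * pot ω eta n (j / b)) := by
          rw [pow_succ]; field_simp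
        _ ≤ _ := by gcongr

lemma pot_pos_of_mass_pos {b m : ℕ} (hb : 0 < b) (hm : 2 ≤ m) (ω : ℕ → Fin m → Fin b) {eta : ℝ}
    (h0 : 0 < eta) (heta : eta ^ m = (b : ℝ) * eta ^ (m - 1) - 1) {n j : ℕ}
    (h : 0 < mass ω eta n j) : 0 < pot ω eta n j := by
  by_contra! h'
  have := mass_le hb hm ω h0 heta n j
  rw [max_eq_right h', zero_mul] at this
  linarith

lemma sum_mass {b m : ℕ} (hb : 0 < b) (hm : 2 ≤ m) (ω : ℕ → Fin m → Fin b) {eta : ℝ}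
    (h0 : 0 < eta) (heta : eta ^ m = (b : ℝ) * eta ^ (m - 1) - 1) (n j : ℕ) :
    ∑ c ∈ Finset.range b, mass ω eta (n + 1) (b * j + c) = mass ω eta n j := by
  have h1 : ∑ c ∈ Finset.range b, mass ω eta (n + 1) (b * j + c) =
      mass ω eta n j * potSum ω eta n j / potSum ω eta n j := by
    rw [potSum, Finset.mul_sum, Finset.sum_div]
    refine Finset.sum_congr rfl fun c hc => ?_
    rw [mass, child_div (Finset.mem_range.1 hc), potSum]
  rw [h1]
  rcases (mass_nonneg ω eta n j).eq_or_lt with h | h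
  · rw [← h]; simp
  · have h2 := pot_pos_of_mass_pos hb hm ω h0 heta h
    have h3 := le_potSum hb hm ω h0 heta h2
    have h4 : 0 < potSum ω eta n j := lt_of_lt_of_le (by positivity) h3
    field_simp

/-- The total mass of the cylinders of level `n` to the left of the one coded by `j`. -/
noncomputable def cum {b m : ℕ} (ω : ℕ → Fin m → Fin b) (eta : ℝ) (n j : ℕ) : ℝ :=
  ∑ i ∈ Finset.range j, mass ω eta n i

lemma cum_mono {b m : ℕ} (ω : ℕ → Fin m → Fin b) (eta : ℝ) (n : ℕ) : Monotone (cum ω eta n) := by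
  intro i j h
  exact Finset.sum_le_sum_of_subset_of_nonneg (Finset.range_mono h)
    fun _ _ _ => mass_nonneg _ _ _ _

lemma cum_succ_le {b m : ℕ} (hb : 0 < b) (hm : 2 ≤ m) (ω : ℕ → Fin m → Fin b) {eta : ℝ}
    (h0 : 0 < eta) (heta : eta ^ m = (b : ℝ) * eta ^ (m - 1) - 1) (n j : ℕ) :
    cum ω eta n (j + 1) ≤ cum ω eta n j + (eta⁻¹) ^ n := by
  rw [cum, Finset.sum_range_succ, ← cum]
  have h1 := mass_le hb hm ω h0 heta n j
  have h2 : max (pot ω eta n j) 0 ≤ 1 := max_le (pot_le_one ω h0 n j) zero_le_one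
  have h3 : max (pot ω eta n j) 0 * (eta⁻¹) ^ n ≤ (eta⁻¹) ^ n :=
    mul_le_of_le_one_left (by positivity) h2
  linarith

lemma cum_child {b m : ℕ} (hb : 0 < b) (hm : 2 ≤ m) (ω : ℕ → Fin m → Fin b) {eta : ℝ}
    (h0 : 0 < eta) (heta : eta ^ m = (b : ℝ) * eta ^ (m - 1) - 1) (n j : ℕ) :
    cum ω eta (n + 1) (b * j) = cum ω eta n j := by
  rw [cum, sum_range_children, cum]
  exact Finset.sum_congr rfl fun i _ => sum_mass hb hm ω h0 heta n i

lemma cum_top {b m : ℕ} (hb : 0 < b) (hm : 2 ≤ m) (ω : ℕ → Fin m → Fin b) {eta : ℝ}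
    (h0 : 0 < eta) (heta : eta ^ m = (b : ℝ) * eta ^ (m - 1) - 1) (n : ℕ) :
    cum ω eta n (b ^ n) = 1 := by
  induction n with
  | zero => simp [cum, mass]
  | succ n ih => rw [pow_succ', cum_child hb hm ω h0 heta, ih]

/-- Inverse distribution function: each `t ∈ [0, 1)` is located in a nested sequence of
cylinders of positive mass, which spells out an admissible sequence. -/
lemma exists_seq {b m : ℕ} (hb : 0 < b) (hm : 2 ≤ m) (ω : ℕ → Fin m → Fin b) {eta : ℝ}
    (h0 : 0 < eta) (heta : eta ^ m = (b : ℝ) * eta ^ (m - 1) - 1) {t : ℝ}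
    (ht : t ∈ Set.Ico (0 : ℝ) 1) :
    ∃ d : ℕ → Fin b, (∀ k : ℕ, (fun j : Fin m => d (k + j.1)) ≠ ω k) ∧
      ∀ n, cum ω eta n (num d n) ≤ t ∧ t < cum ω eta n (num d n + 1) := by
  have h1 : ∀ n, ∃ j, j < b ^ n ∧ cum ω eta n j ≤ t ∧ t < cum ω eta n (j + 1) := by
    intro n
    have hex : ∃ j, t < cum ω eta n (j + 1) :=
      ⟨b ^ n, ht.2.trans_le ((cum_top hb hm ω h0 heta n).symm.le.trans
        (cum_mono ω eta n (Nat.le_succ _)))⟩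
    classical
    have hs := Nat.find_spec hex
    have hle : cum ω eta n (Nat.find hex) ≤ t := by
      rcases hf : Nat.find hex with _ | k
      · simpa [cum] using ht.1
      · exact not_lt.1 (Nat.find_min hex (m := k) (by omega))
    refine ⟨Nat.find hex, ?_, hle, hs⟩
    by_contra! h
    have := cum_mono ω eta n h
    rw [cum_top hb hm ω h0 heta n] at this
    linarith [ht.2]
  choose J hJ hJ1 hJ2 using h1
  have hdiv : ∀ n, J (n + 1) / b = J n := by
    intro n
    have e := Nat.div_add_mod (J (n + 1)) b
    have l := Nat.mod_lt (J (n + 1)) hb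
    apply le_antisymm
    · have h2 : cum ω eta n (J (n + 1) / b) ≤ t := by
        rw [← cum_child hb hm ω h0 heta]
        exact (cum_mono ω eta _ (by omega)).trans (hJ1 (n + 1))
      by_contra! h
      have := cum_mono ω eta n (Nat.succ_le_of_lt h)
      linarith [hJ2 n]
    · have h2 : t < cum ω eta n (J (n + 1) / b + 1) := by
        rw [← cum_child hb hm ω h0 heta]
        exact (hJ2 (n + 1)).trans_le (cum_mono ω eta _ (by rw [Nat.mul_succ]; omega))
      by_contra! h
      have := cum_mono ω eta n (Nat.succ_le_of_lt h)
      linarith [hJ1 n]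
  let d : ℕ → Fin b := fun n => ⟨J (n + 1) % b, Nat.mod_lt _ hb⟩
  have hnum : ∀ n, num d n = J n := by
    intro n
    induction n with
    | zero => have := hJ 0; simp at this; simp [num, this]
    | succ n ih =>
      rw [num, ih, ← hdiv n]
      exact Nat.div_add_mod _ _
  refine ⟨d, fun k hk => ?_, fun n => by rw [hnum]; exact ⟨hJ1 n, hJ2 n⟩⟩
  have h2 := (alive_num_iff ω d k).2 hk
  rw [hnum] at h2
  have h3 : 0 < mass ω eta (k + m) (J (k + m)) := by
    have := hJ1 (k + m)
    have h4 := hJ2 (k + m)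
    rw [cum, Finset.sum_range_succ, ← cum] at h4
    linarith
  exact (pot_nonpos hm ω h0 h2).not_gt (pot_pos_of_mass_pos hb hm ω h0 heta h3)

/-- Points at distance at most `b ^ (-n)` lie in cylinders of level `n` whose codes differ by at
most `2`, hence at most three cylinders separate the corresponding parameters. -/
lemma param_le {b m : ℕ} (hb : 0 < b) (hm : 2 ≤ m) (ω : ℕ → Fin m → Fin b) {eta : ℝ}
    (h0 : 0 < eta) (heta : eta ^ m = (b : ℝ) * eta ^ (m - 1) - 1) {t t' : ℝ} {d d' : ℕ → Fin b}
    (n : ℕ) (h : t < cum ω eta n (num d n + 1)) (h' : cum ω eta n (num d' n) ≤ t')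
    (hd : |val d - val d'| ≤ ((b : ℝ)⁻¹) ^ n) : t - t' ≤ 3 * (eta⁻¹) ^ n := by
  have hb' : (0 : ℝ) < (b : ℝ) ^ n := by positivity
  have h1 := (val_mem d n).1
  have h2 := (val_mem d' n).2
  have h3 : (num d n : ℝ) ≤ num d' n + 2 := by
    have h4 : (num d n : ℝ) / b ^ n ≤ (num d' n + 2) / b ^ n := by
      have h5 : ((num d' n : ℝ) + 2) / b ^ n = (num d' n + 1) / b ^ n + ((b : ℝ)⁻¹) ^ n := by
        rw [inv_pow]; field_simp; ring
      have := (abs_le.1 hd).2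
      linarith
    exact (div_le_div_iff_of_pos_right hb').1 h4
  have h4 : num d n ≤ num d' n + 2 := by exact_mod_cast h3
  have h5 := cum_mono ω eta n (Nat.succ_le_succ h4)
  have c := cum_succ_le hb hm ω h0 heta n
  have c0 := c (num d' n)
  have c1 := c (num d' n + 1)
  have c2 := c (num d' n + 2)
  simp only [Nat.succ_eq_add_one, add_assoc, Nat.reduceAdd] at h5 c1 c2 h
  linarith

lemma lower_bound {b m : ℕ} (hb : 3 ≤ b) (hm : 2 ≤ m) (ω : ℕ → Fin m → Fin b) {eta : ℝ}
    (h1 : 1 < eta) (heta : eta ^ m = (b : ℝ) * eta ^ (m - 1) - 1) :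
    ENNReal.ofReal (Real.log eta / Real.log b) ≤ dimH (Kset b m ω) := by
  have h0 : 0 < eta := by linarith
  have hb0 : 0 < b := by omega
  have hb1 : (1 : ℝ) < b := by exact_mod_cast (by omega : 1 < b)
  have hbi : (0 : ℝ) < (b : ℝ)⁻¹ := by positivity
  have hlb := Real.log_pos hb1
  set s : ℝ := Real.log eta / Real.log b with hs
  have hs0 : 0 < s := div_pos (Real.log_pos h1) hlb
  have hbs : ((b : ℝ)⁻¹) ^ s = eta⁻¹ := by
    rw [Real.inv_rpow (by positivity), Real.rpow_def_of_pos (by positivity), hs,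
      mul_div_cancel₀ _ hlb.ne', Real.exp_log h0]
  have hex := fun t : Set.Ico (0 : ℝ) 1 => exists_seq hb0 hm ω h0 heta t.2
  choose D hD1 hD2 using hex
  have near : ∀ (t t' : Set.Ico (0 : ℝ) 1) (n : ℕ),
      |val (D t) - val (D t')| ≤ ((b : ℝ)⁻¹) ^ n → |(t : ℝ) - t'| ≤ 3 * (eta⁻¹) ^ n := by
    intro t t' n h
    rw [abs_sub_le_iff]
    exact ⟨param_le hb0 hm ω h0 heta n (hD2 t n).2 (hD2 t' n).1 h,
      param_le hb0 hm ω h0 heta n (hD2 t' n).2 (hD2 t n).1 (by rwa [abs_sub_comm])⟩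
  have holder : ∀ t t' : Set.Ico (0 : ℝ) 1,
      |(t : ℝ) - t'| ≤ 3 * eta * |val (D t) - val (D t')| ^ s := by
    intro t t'
    rcases (abs_nonneg (val (D t) - val (D t'))).eq_or_lt with h | h
    · have hlim : Tendsto (fun n : ℕ => 3 * (eta⁻¹) ^ n) atTop (nhds (3 * 0)) :=
        (tendsto_pow_atTop_nhds_zero_of_lt_one (by positivity)
          (inv_lt_one_of_one_lt₀ h1)).const_mul 3
      have := ge_of_tendsto' hlim fun n => near t t' n (by rw [← h]; positivity)
      rw [← h, Real.zero_rpow hs0.ne']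
      linarith
    · have hle : |val (D t) - val (D t')| ≤ 1 := by
        have a := val_mem (D t) 0
        have a' := val_mem (D t') 0
        simp only [num, pow_zero, Set.mem_Icc, Nat.cast_zero, div_one, zero_add] at a a'
        rw [abs_sub_le_iff]
        constructor <;> linarith [a.1, a.2, a'.1, a'.2]
      obtain ⟨n, hn1, hn2⟩ := exists_nat_pow_near_of_lt_one h hle hbi (inv_lt_one_of_one_lt₀ hb1)
      calc |(t : ℝ) - t'| ≤ 3 * (eta⁻¹) ^ n := near t t' n hn2
        _ = 3 * eta * (((b : ℝ)⁻¹) ^ (n + 1)) ^ s := by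
          rw [← Real.rpow_natCast (b : ℝ)⁻¹, ← Real.rpow_mul hbi.le, mul_comm ((n + 1 : ℕ) : ℝ) s,
            Real.rpow_mul hbi.le, hbs, Real.rpow_natCast, pow_succ]
          field_simp
        _ ≤ _ := by gcongr
  -- The inverse `f` of `t ↦ val (D t)` is Hölder of exponent `s` and maps onto `[0, 1)`.
  have hinj : Function.Injective fun t => val (D t) := by
    intro t t' h
    have h2 := holder t t'
    simp only at h
    rw [h, sub_self, abs_zero, Real.zero_rpow hs0.ne', mul_zero] at h2
    exact Subtype.ext (sub_eq_zero.1 (abs_eq_zero.1 (le_antisymm h2 (abs_nonneg _))))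
  have : Nonempty (Set.Ico (0 : ℝ) 1) := ⟨⟨0, by simp⟩⟩
  let f : ℝ → ℝ := fun x => (Function.invFun (fun t => val (D t)) x : Set.Ico (0 : ℝ) 1)
  have hf : ∀ t, f (val (D t)) = t := fun t =>
    congrArg Subtype.val (Function.leftInverse_invFun hinj t)
  have hH : HolderOnWith (Real.toNNReal (3 * eta)) (Real.toNNReal s) f
      (Set.range fun t => val (D t)) := by
    rintro _ ⟨t, rfl⟩ _ ⟨t', rfl⟩
    simp only [hf, edist_dist, Real.dist_eq, Real.coe_toNNReal s hs0.le]
    rw [ENNReal.ofReal_rpow_of_nonneg (abs_nonneg _) hs0.le]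
    change _ ≤ ENNReal.ofReal (3 * eta) * _
    rw [← ENNReal.ofReal_mul (by positivity)]
    exact ENNReal.ofReal_le_ofReal (holder t t')
  have hdim := hH.dimH_image_le (Real.toNNReal_pos.2 hs0)
  have himg : f '' (Set.range fun t => val (D t)) = Set.Ico 0 1 := by
    ext y
    constructor
    · rintro ⟨_, ⟨t, rfl⟩, rfl⟩
      simp only [hf]
      exact t.2
    · intro hy
      exact ⟨_, ⟨⟨y, hy⟩, rfl⟩, hf _⟩
  rw [himg, Real.dimH_of_nonempty_interior (by simp)] at hdim
  simp only [Module.finrank_self, Nat.cast_one] at hdim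
  have hsub : (Set.range fun t => val (D t)) ⊆ Kset b m ω := by
    rintro _ ⟨t, rfl⟩
    exact ⟨D t, hD1 t, rfl⟩
  have hne : ((Real.toNNReal s : NNReal) : ENNReal) ≠ 0 := by
    simpa using hs0
  rw [ENNReal.le_div_iff_mul_le (Or.inl hne) (Or.inl ENNReal.coe_ne_top), one_mul] at hdim
  exact hdim.trans (dimH_mono hsub)

/-! ### Upper bound: counting admissible words -/

/-- `upPot b lam q` bounds, up to scaling, the number of continuations of a word of which the last
`q` letters begin a forbidden word. -/
noncomputable def upPot (b : ℕ) (lam : ℝ) (q : ℕ) : ℝ :=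
  lam ^ q - ((b : ℝ) - 1) * ∑ i ∈ Finset.range q, lam ^ i

lemma upPot_zero (b : ℕ) (lam : ℝ) : upPot b lam 0 = 1 := by simp [upPot]

lemma upPot_succ (b : ℕ) (lam : ℝ) (q : ℕ) :
    upPot b lam (q + 1) = lam * upPot b lam q - (b - 1) := by
  simp only [upPot, Finset.sum_range_succ', pow_succ, ← Finset.sum_mul]
  ring

lemma upPot_anti {b : ℕ} {lam : ℝ} (h0 : 0 < lam) (h : lam < b) : Antitone (upPot b lam) := by
  refine antitone_nat_of_succ_le fun q => ?_
  induction q with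
  | zero => rw [upPot_succ, upPot_zero]; linarith
  | succ q ih =>
    rw [upPot_succ b lam (q + 1)]
    nth_rewrite 2 [upPot_succ b lam q]
    have := mul_le_mul_of_nonneg_left ih h0.le
    linarith

/-- No prefix of the word of length `n` coded by `j` ends with a completed forbidden word. -/
def Allowed {b m : ℕ} (ω : ℕ → Fin m → Fin b) : ℕ → ℕ → Prop
  | 0, _ => True
  | n + 1, j => Allowed ω n (j / b) ∧ ¬ Alive ω (n + 1) m j

lemma allowed_num {b m : ℕ} (ω : ℕ → Fin m → Fin b) (d : ℕ → Fin b)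
    (hd : ∀ k : ℕ, (fun j : Fin m => d (k + j.1)) ≠ ω k) (n : ℕ) :
    Allowed ω n (num d n) := by
  induction n with
  | zero => trivial
  | succ n ih => exact ⟨by rwa [num_div], not_alive_num ω d hd (n + 1)⟩

open Classical in
/-- The length of the longest suffix of a word that begins a forbidden word. -/
noncomputable def run {b m : ℕ} (ω : ℕ → Fin m → Fin b) (n j : ℕ) : ℕ :=
  Nat.findGreatest (fun q => Alive ω n q j) m

lemma alive_run {b m : ℕ} (ω : ℕ → Fin m → Fin b) (n j : ℕ) : Alive ω n (run ω n j) j := by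
  classical
  exact Nat.findGreatest_spec (P := fun q => Alive ω n q j) (Nat.zero_le m)
    (by cases n <;> trivial)

lemma run_lt {b m : ℕ} (hm : 2 ≤ m) (ω : ℕ → Fin m → Fin b) {n j : ℕ} (h : Allowed ω n j) :
    run ω n j < m := by
  classical
  refine lt_of_le_of_ne (Nat.findGreatest_le m) fun he => ?_
  have h1 := alive_run ω n j
  rw [he] at h1
  cases n with
  | zero => have := alive_le ω h1; omega
  | succ n => exact h.2 h1

open Classical in
/-- The counting weight of a word, which vanishes on words that are not allowed. -/
noncomputable def wt {b m : ℕ} (ω : ℕ → Fin m → Fin b) (lam : ℝ) (n j : ℕ) : ℝ :=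
  if Allowed ω n j then upPot b lam (run ω n j) else 0

lemma upPot_nonneg {b m : ℕ} {lam : ℝ} (h0 : 0 < lam) (h : lam < b)
    (hlam : lam ^ m = ((b : ℝ) - 1) * ∑ i ∈ Finset.range m, lam ^ i) {q : ℕ} (hq : q ≤ m) :
    0 ≤ upPot b lam q := by
  have h1 := upPot_anti h0 h hq
  have h2 : upPot b lam m = 0 := by rw [upPot, hlam, sub_self]
  linarith

lemma wt_le {b m : ℕ} (ω : ℕ → Fin m → Fin b) {lam : ℝ} (h0 : 0 < lam) (h : lam < b)
    (hlam : lam ^ m = ((b : ℝ) - 1) * ∑ i ∈ Finset.range m, lam ^ i) {n j q : ℕ} (hq : q ≤ m)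
    (ha : Alive ω n q j) : wt ω lam n j ≤ upPot b lam q := by
  classical
  unfold wt
  split_ifs
  · exact upPot_anti h0 h (Nat.le_findGreatest hq ha)
  · exact upPot_nonneg h0 h hlam hq

/-- Among the children of a word, one has its longest run extended and the other `b - 1` have
weight at most `upPot b lam 0 = 1`. -/
lemma sum_wt {b m : ℕ} (hb : 3 ≤ b) (hm : 2 ≤ m) (ω : ℕ → Fin m → Fin b) {lam : ℝ} (h0 : 0 < lam)
    (h : lam < b) (hlam : lam ^ m = ((b : ℝ) - 1) * ∑ i ∈ Finset.range m, lam ^ i) (n j : ℕ) :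
    ∑ c ∈ Finset.range b, wt ω lam (n + 1) (b * j + c) ≤ lam * wt ω lam n j := by
  classical
  by_cases ha : Allowed ω n j
  · have hr := run_lt hm ω ha
    set q := run ω n j with hq
    set c₀ := ltr ω (n - q) q
    have hc₀ : c₀ ∈ Finset.range b := Finset.mem_range.2 (ltr_lt (by omega) _ _ _)
    rw [← Finset.add_sum_erase _ _ hc₀]
    have h1 : wt ω lam (n + 1) (b * j + c₀) ≤ upPot b lam (q + 1) :=
      wt_le ω h0 h hlam hr
        ((alive_child ω (Finset.mem_range.1 hc₀)).2 ⟨alive_run ω n j, rfl⟩)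
    have h2 : ∑ c ∈ (Finset.range b).erase c₀, wt ω lam (n + 1) (b * j + c) ≤ (b - 1 : ℝ) := by
      have h3 : ∀ c ∈ (Finset.range b).erase c₀, wt ω lam (n + 1) (b * j + c) ≤ 1 := by
        intro c _
        rw [← upPot_zero b lam]
        exact wt_le ω h0 h hlam (Nat.zero_le m) trivial
      have h4 := Finset.sum_le_card_nsmul _ _ _ h3
      rw [Finset.card_erase_of_mem hc₀, Finset.card_range, nsmul_eq_mul, mul_one,
        Nat.cast_sub (by omega)] at h4
      simpa using h4
    have h3 : wt ω lam n j = upPot b lam q := if_pos ha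
    rw [h3]
    have := upPot_succ b lam q
    linarith
  · have h1 : wt ω lam n j = 0 := if_neg ha
    rw [h1, mul_zero]
    refine (Finset.sum_eq_zero fun c hc => if_neg fun h' => ha ?_).le
    have := h'.1
    rwa [child_div (Finset.mem_range.1 hc)] at this

lemma total_wt {b m : ℕ} (hb : 3 ≤ b) (hm : 2 ≤ m) (ω : ℕ → Fin m → Fin b) {lam : ℝ} (h0 : 0 < lam)
    (h : lam < b) (hlam : lam ^ m = ((b : ℝ) - 1) * ∑ i ∈ Finset.range m, lam ^ i) (n : ℕ) :
    ∑ j ∈ Finset.range (b ^ n), wt ω lam n j ≤ lam ^ n := by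
  induction n with
  | zero =>
    simp only [pow_zero, Finset.sum_range_one]
    rw [← upPot_zero b lam]
    exact wt_le ω h0 h hlam (Nat.zero_le m) trivial
  | succ n ih =>
    rw [pow_succ', sum_range_children]
    calc _ ≤ ∑ j ∈ Finset.range (b ^ n), lam * wt ω lam n j :=
          Finset.sum_le_sum fun j _ => sum_wt hb hm ω h0 h hlam n j
      _ ≤ lam ^ (n + 1) := by
        rw [← Finset.mul_sum, pow_succ']
        gcongr

open Classical in
/-- There are `O(λ ^ n)` allowed words of length `n`. -/
lemma card_allowed {b m : ℕ} (hb : 3 ≤ b) (hm : 2 ≤ m) (ω : ℕ → Fin m → Fin b) {lam : ℝ}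
    (h0 : 0 < lam) (h : lam < b)
    (hlam : lam ^ m = ((b : ℝ) - 1) * ∑ i ∈ Finset.range m, lam ^ i) (n : ℕ) :
    (((Finset.range (b ^ n)).filter fun j => Allowed ω n j).card : ℝ) ≤
      lam / (b - 1) * lam ^ n := by
  have hb1 : (0 : ℝ) < b - 1 := by
    have : (3 : ℝ) ≤ b := by exact_mod_cast hb
    linarith
  have h1 : upPot b lam (m - 1) = (b - 1) / lam := by
    have h2 := upPot_succ b lam (m - 1)
    rw [Nat.sub_add_cancel (by omega), upPot, hlam, sub_self] at h2
    rw [eq_div_iff h0.ne']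
    linarith
  have h2 : ∀ j ∈ (Finset.range (b ^ n)).filter fun j => Allowed ω n j,
      (b - 1) / lam ≤ wt ω lam n j := by
    intro j hj
    have ha := (Finset.mem_filter.1 hj).2
    have := run_lt hm ω ha
    rw [← h1, wt, if_pos ha]
    exact upPot_anti h0 h (by omega)
  have h3 := Finset.card_nsmul_le_sum _ _ _ h2
  have h4 : ∑ j ∈ (Finset.range (b ^ n)).filter (fun j => Allowed ω n j), wt ω lam n j ≤
      lam ^ n := by
    rw [Finset.sum_filter_of_ne]
    · exact total_wt hb hm ω h0 h hlam n
    · intro j _ hj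
      by_contra h'
      exact hj (if_neg h')
  rw [nsmul_eq_mul] at h3
  have h5 := h3.trans h4
  rw [← mul_div_assoc, div_le_iff₀ h0] at h5
  rw [div_mul_eq_mul_div, le_div_iff₀ hb1]
  linarith

lemma upper_bound {b m : ℕ} (hb : 3 ≤ b) (hm : 2 ≤ m) (ω : ℕ → Fin m → Fin b) {lam : ℝ}
    (h1 : 1 < lam) (h : lam < b)
    (hlam : lam ^ m = ((b : ℝ) - 1) * ∑ i ∈ Finset.range m, lam ^ i) :
    dimH (Kset b m ω) ≤ ENNReal.ofReal (Real.log lam / Real.log b) := by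
  classical
  have h0 : 0 < lam := by linarith
  have hb1 : (1 : ℝ) < b := by linarith
  have hb0 : (0 : ℝ) < b := by linarith
  have hbi : (0 : ℝ) < (b : ℝ)⁻¹ := by positivity
  have hlb := Real.log_pos hb1
  set s : ℝ := Real.log lam / Real.log b with hs
  have hs0 : 0 < s := div_pos (Real.log_pos h1) hlb
  have hbs : ((b : ℝ)⁻¹) ^ s = lam⁻¹ := by
    rw [Real.inv_rpow (by positivity), Real.rpow_def_of_pos (by positivity), hs,
      mul_div_cancel₀ _ hlb.ne', Real.exp_log h0]
  let S : ℕ → Finset ℕ := fun n => (Finset.range (b ^ n)).filter fun j => Allowed ω n j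
  let T : ∀ n, S n → Set ℝ := fun n j =>
    Set.Icc (((j : ℕ) : ℝ) / (b : ℝ) ^ n) ((((j : ℕ) : ℝ) + 1) / (b : ℝ) ^ n)
  have hT : ∀ n (j : S n), Metric.ediam (T n j) = ENNReal.ofReal (((b : ℝ)⁻¹) ^ n) := by
    intro n j
    rw [Real.ediam_Icc]
    congr 1
    rw [inv_pow]
    field_simp
    ring
  have hr : Tendsto (fun n : ℕ => ENNReal.ofReal (((b : ℝ)⁻¹) ^ n)) atTop (nhds 0) := by
    rw [← ENNReal.ofReal_zero]
    exact ENNReal.tendsto_ofReal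
      (tendsto_pow_atTop_nhds_zero_of_lt_one hbi.le (inv_lt_one_of_one_lt₀ hb1))
  have hcov : ∀ n, Kset b m ω ⊆ ⋃ j, T n j := by
    rintro n _ ⟨d, hd, rfl⟩
    exact Set.mem_iUnion.2 ⟨⟨num d n, Finset.mem_filter.2
      ⟨Finset.mem_range.2 (num_lt d n), allowed_num ω d hd n⟩⟩, val_mem d n⟩
  have hsum : ∀ n, ∑ j, Metric.ediam (T n j) ^ s ≤ ENNReal.ofReal (lam / (b - 1)) := by
    intro n
    simp only [hT, ENNReal.ofReal_rpow_of_nonneg (pow_nonneg hbi.le n) hs0.le]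
    rw [Finset.sum_const, Finset.card_univ, Fintype.card_coe, nsmul_eq_mul,
      ← ENNReal.ofReal_natCast, ← ENNReal.ofReal_mul (by positivity)]
    apply ENNReal.ofReal_le_ofReal
    have e : (((b : ℝ)⁻¹) ^ n) ^ s = (lam ^ n)⁻¹ := by
      rw [← Real.rpow_natCast, ← Real.rpow_mul hbi.le, mul_comm (n : ℝ) s,
        Real.rpow_mul hbi.le, hbs, Real.rpow_natCast, inv_pow]
    rw [e, ← div_eq_mul_inv, div_le_iff₀ (by positivity)]
    exact card_allowed hb hm ω h0 h hlam n
  have hmeas : Measure.hausdorffMeasure s (Kset b m ω) ≤ ENNReal.ofReal (lam / (b - 1)) := by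
    refine (Measure.hausdorffMeasure_le_liminf_sum s _ _ hr T
      (Eventually.of_forall fun n j => (hT n j).le) (Eventually.of_forall hcov)).trans ?_
    refine (liminf_le_liminf (Eventually.of_forall hsum)).trans ?_
    rw [liminf_const]
  change _ ≤ ((Real.toNNReal s : NNReal) : ENNReal)
  apply dimH_le_of_hausdorffMeasure_ne_top
  rw [Real.coe_toNNReal s hs0.le]
  exact ne_top_of_le_ne_top ENNReal.ofReal_ne_top hmeas

/-- **Theorem 1.3 (i).** For every `ω`, the Hausdorff dimension of `K^ω` lies between
`log η / log b` and `log λ / log b`. -/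
theorem dimH_survivor_bounds (b m : ℕ) (hb : 3 ≤ b) (hm : 2 ≤ m)
    (ω : ℕ → Fin m → Fin b)
    (eta : ℝ) (heta1 : (b : ℝ) - 1 < eta) (heta2 : eta < (b : ℝ))
    (heta : eta ^ m = (b : ℝ) * eta ^ (m - 1) - 1)
    (lam : ℝ) (hlam1 : (b : ℝ) - 1 < lam) (hlam2 : lam < (b : ℝ))
    (hlam : lam ^ m = ((b : ℝ) - 1) * ∑ i ∈ Finset.range m, lam ^ i) :
    ENNReal.ofReal (Real.log eta / Real.log b) ≤ dimH (Kset b m ω) ∧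
    dimH (Kset b m ω) ≤ ENNReal.ofReal (Real.log lam / Real.log b) := by
  have hb3 : (3 : ℝ) ≤ b := by exact_mod_cast hb
  exact ⟨lower_bound hb hm ω (by linarith) heta, upper_bound hb hm ω (by linarith) hlam2 hlam⟩

end Paper
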